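/- Let G be a connected graph and let k, λ, m be positive integers with m ≤ min{k, λ} + 1. If σ_m ≥ t_{k+1} − λ(k − m + 1), then t_k ≥ t_{k+1} − λ + 1. (Theorem 3) -/

import Mathlib

open SimpleGraph

variable {V : Type*}

/-- A set of vertices is independent in `G`. -/
def IsIndSet (G : SimpleGraph V) (s : Set V) : Prop :=
  ∀ ⦃u⦄, u ∈ s → ∀ ⦃v⦄, v ∈ s → ¬ G.Adj u v

/-- The number of end-vertices (vertices of degree one) of a subgraph `H`. -/
noncomputable def endVertexCount {G : SimpleGraph V} (H : G.Subgraph) : ℕ :=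
  {v : V | v ∈ H.verts ∧ (H.neighborSet v).ncard = 1}.ncard

/-- `H` is a cycle; a single vertex and a single edge are regarded as
simple cycles of orders 1 and 2, respectively. -/
def IsCycleSubgraph {G : SimpleGraph V} (H : G.Subgraph) : Prop :=
  H.Connected ∧ (H.verts.ncard ≤ 2 ∨ ∀ v ∈ H.verts, (H.neighborSet v).ncard = 2)

/-- `H` is a `k`-ended tree in `G`: a tree with at most `k` end-vertices (leaves);
a cycle is regarded as a 1-ended tree. -/
def IsKEndedTree (G : SimpleGraph V) (k : ℕ) (H : G.Subgraph) : Prop :=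
  (H.coe.IsTree ∧ endVertexCount H ≤ k) ∨ (1 ≤ k ∧ IsCycleSubgraph H)

/-- `t k`: the order of a largest `k`-ended tree in `G`. -/
noncomputable def maxKEndedOrder (G : SimpleGraph V) (k : ℕ) : ℕ :=
  sSup {n | ∃ H : G.Subgraph, IsKEndedTree G k H ∧ H.verts.ncard = n}

/-- `σ m`: the minimum degree sum over independent sets of `m` vertices of `G`,
and `+∞` if the independence number of `G` is less than `m`. -/
noncomputable def minDegreeSum (G : SimpleGraph V) [Fintype V] [DecidableRel G.Adj]
    (m : ℕ) : ℕ∞ :=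
  ⨅ s ∈ {s : Finset V | s.card = m ∧ IsIndSet G ↑s}, (∑ v ∈ s, G.degree v : ℕ∞)

/-- The vertices `f 0, …, f n` are distinct and consecutive ones are adjacent in `T`. -/
def TracesPath (T : SimpleGraph V) (f : ℕ → V) (n : ℕ) : Prop :=
  (∀ t < n, T.Adj (f t) (f (t + 1))) ∧ ∀ s ≤ n, ∀ t ≤ n, f s = f t → s = t

/-- The edges of `T` form a tree with vertex set `S`. -/
structure IsTreeOn (T : SimpleGraph V) (S : Set V) : Prop where
  nonempty : S.Nonempty
  mem_of_adj : ∀ ⦃u v⦄, T.Adj u v → u ∈ S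
  reachable : ∀ ⦃u⦄, u ∈ S → ∀ ⦃v⦄, v ∈ S → T.Reachable u v
  isAcyclic : T.IsAcyclic

/-- The vertices of degree one. -/
def leaves (T : SimpleGraph V) : Set V := {v | (T.neighborSet v).ncard = 1}

lemma mem_leaves_iff {T : SimpleGraph V} {x : V} : x ∈ leaves T ↔ ∃ y, T.neighborSet x = {y} :=
  Set.ncard_eq_one

lemma eq_of_mem_leaves {T : SimpleGraph V} {x y z : V} (hx : x ∈ leaves T) (hy : T.Adj x y)
    (hz : T.Adj x z) : y = z := by
  obtain ⟨w, hw⟩ := mem_leaves_iff.1 hx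
  have h1 : y ∈ T.neighborSet x := hy
  have h2 : z ∈ T.neighborSet x := hz
  rw [hw] at h1 h2
  exact h1.trans h2.symm

/-- A vertex of degree two has at most one neighbour besides a given one. -/
lemma eq_of_ncard_neighborSet_eq_two {T : SimpleGraph V} {v a b c : V}
    (hv : (T.neighborSet v).ncard = 2) (ha : T.Adj v a) (hb : T.Adj v b) (hc : T.Adj v c)
    (hab : a ≠ b) (hac : a ≠ c) : b = c := by
  obtain ⟨p, q, -, hpq⟩ := Set.ncard_eq_two.1 hv
  have h1 : a ∈ T.neighborSet v := ha
  have h2 : b ∈ T.neighborSet v := hb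
  have h3 : c ∈ T.neighborSet v := hc
  rw [hpq] at h1 h2 h3
  simp only [Set.mem_insert_iff, Set.mem_singleton_iff] at h1 h2 h3
  grind

lemma reachable_of_forall_adj {T : SimpleGraph V} {f : ℕ → V} {a b : ℕ} (hab : a ≤ b)
    (h : ∀ s, a ≤ s → s < b → T.Adj (f s) (f (s + 1))) : T.Reachable (f a) (f b) := by
  induction b, hab using Nat.le_induction with
  | base => exact Reachable.refl _
  | succ b hab ih =>
    exact (ih fun s h1 h2 => h s h1 (by omega)).trans (h b hab (by omega)).reachable

namespace TracesPath

variable {T : SimpleGraph V} {f : ℕ → V} {n : ℕ}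

lemma shift (h : TracesPath T f n) {a b : ℕ} (hab : a + b ≤ n) :
    TracesPath T (fun t => f (a + t)) b :=
  ⟨fun t ht => h.1 (a + t) (by omega), fun s hs t ht e => by
    have := h.2 (a + s) (by omega) (a + t) (by omega) e
    omega⟩

lemma dist_le (h : TracesPath T f n) : T.dist (f 0) (f n) ≤ n := by
  have key : ∀ m ≤ n, ∃ p : T.Walk (f 0) (f m), p.length = m := by
    intro m
    induction m with
    | zero => exact fun _ => ⟨Walk.nil, rfl⟩
    | succ m ih =>
      intro hm
      obtain ⟨p, hp⟩ := ih (by omega)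
      exact ⟨p.concat (h.1 m (by omega)), by simp [hp]⟩
  obtain ⟨p, hp⟩ := key n le_rfl
  exact (SimpleGraph.dist_le p).trans_eq hp

/-- An end-vertex occurs on a path only as one of its two ends. -/
lemma eq_of_mem_leaves (h : TracesPath T f n) {t : ℕ} (ht : 0 < t) (htn : t ≤ n)
    (hl : f t ∈ leaves T) : t = n := by
  by_contra hne
  have h1 := h.1 (t - 1) (by omega)
  have h2 := h.1 t (by omega)
  rw [Nat.sub_add_cancel ht] at h1
  have := h.2 _ (by omega) _ (by omega) (_root_.eq_of_mem_leaves hl h1.symm h2)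
  omega

end TracesPath

namespace IsTreeOn

variable {T : SimpleGraph V} {S : Set V}

lemma exists_tracesPath (hT : IsTreeOn T S) {u v : V} (hu : u ∈ S) (hv : v ∈ S) :
    ∃ f : ℕ → V, f 0 = u ∧ f (T.dist u v) = v ∧ TracesPath T f (T.dist u v) := by
  obtain ⟨p, hp⟩ := (hT.reachable hu hv).exists_walk_length_eq_dist
  have hpath := p.isPath_of_length_eq_dist hp
  refine ⟨p.getVert, p.getVert_zero, hp ▸ p.getVert_length, ?_, ?_⟩
  · intro t ht
    exact p.adj_getVert_succ (by omega)
  · intro s hs t ht e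
    exact hpath.getVert_injOn (by simp; omega) (by simp; omega) e

lemma mem_of_mem_leaves (hT : IsTreeOn T S) {x : V} (hx : x ∈ leaves T) : x ∈ S := by
  obtain ⟨y, hy⟩ := mem_leaves_iff.1 hx
  exact hT.mem_of_adj (show y ∈ T.neighborSet x from hy ▸ Set.mem_singleton y)

end IsTreeOn

/-- Delete the edge `ab` and add the edge `uv`. -/
def swapEdge (T : SimpleGraph V) (a b u v : V) : SimpleGraph V :=
  T.deleteEdges {s(a, b)} ⊔ edge u v

lemma swapEdge_adj {T : SimpleGraph V} {a b u v p q : V} (huv : u ≠ v) :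
    (swapEdge T a b u v).Adj p q ↔
      (T.Adj p q ∧ ¬ (p = a ∧ q = b) ∧ ¬ (p = b ∧ q = a)) ∨ (p = u ∧ q = v) ∨ (p = v ∧ q = u) := by
  simp only [swapEdge, sup_adj, deleteEdges_adj, edge_adj, Set.mem_singleton_iff, Sym2.eq_iff]
  grind

lemma IsTreeOn.swapEdge {T : SimpleGraph V} {S : Set V} (hT : IsTreeOn T S) {a b u v : V}
    (hu : u ∈ S) (hv : v ∈ S) (huv : u ≠ v) (hab : T.Adj a b)
    (hua : (T.deleteEdges {s(a, b)}).Reachable u a)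
    (hbv : (T.deleteEdges {s(a, b)}).Reachable b v) : IsTreeOn (swapEdge T a b u v) S := by
  have hle : T.deleteEdges {s(a, b)} ≤ _root_.swapEdge T a b u v := le_sup_left
  have huv' : (_root_.swapEdge T a b u v).Adj u v := by simp [swapEdge_adj huv]
  have hstep : ∀ p q, T.Adj p q → (_root_.swapEdge T a b u v).Reachable p q := by
    intro p q hpq
    have hab' : (_root_.swapEdge T a b u v).Reachable a b :=
      ((hua.mono hle).symm.trans huv'.reachable).trans (hbv.mono hle).symm
    by_cases h1 : p = a ∧ q = b
    · rw [h1.1, h1.2]; exact hab'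
    by_cases h2 : p = b ∧ q = a
    · rw [h2.1, h2.2]; exact hab'.symm
    exact Adj.reachable ((swapEdge_adj huv).2 (Or.inl ⟨hpq, h1, h2⟩))
  refine ⟨hT.nonempty, ?_, ?_, ?_⟩
  · intro p q hpq
    rcases (swapEdge_adj huv).1 hpq with h | h | h
    · exact hT.mem_of_adj h.1
    · exact h.1 ▸ hu
    · exact h.1 ▸ hv
  · intro p hp q hq
    obtain ⟨w⟩ := hT.reachable hp hq
    clear hp hq
    induction w with
    | nil => exact Reachable.refl _
    | cons h _ ih => exact (hstep _ _ h).trans ih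
  · apply IsAcyclic.sup_edge_of_not_reachable
    · intro h
      have hbr := isAcyclic_iff_forall_adj_isBridge.1 hT.isAcyclic hab
      rw [isBridge_iff] at hbr
      exact hbr ((hua.symm.trans h).trans hbv.symm)
    · exact hT.isAcyclic.anti (deleteEdges_le _)

/-- Remove all edges at the vertex `x`. -/
def isolateVertex (T : SimpleGraph V) (x : V) : SimpleGraph V where
  Adj u v := T.Adj u v ∧ u ≠ x ∧ v ≠ x
  symm := ⟨fun _ _ h => ⟨h.1.symm, h.2.2, h.2.1⟩⟩
  loopless := ⟨fun _ h => h.1.ne rfl⟩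

lemma isolateVertex_le (T : SimpleGraph V) (x : V) : isolateVertex T x ≤ T := fun _ _ h => h.1

lemma IsTreeOn.isolateVertex {T : SimpleGraph V} {S : Set V} (hT : IsTreeOn T S) {x : V}
    (hx : x ∈ leaves T) : IsTreeOn (isolateVertex T x) (S \ {x}) := by
  obtain ⟨y, hy⟩ := mem_leaves_iff.1 hx
  have hxy : T.Adj x y := show y ∈ T.neighborSet x from hy ▸ Set.mem_singleton y
  refine ⟨⟨y, hT.mem_of_adj hxy.symm, hxy.ne'⟩, fun u v h => ⟨hT.mem_of_adj h.1, h.2.1⟩, ?_,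
    hT.isAcyclic.anti (isolateVertex_le T x)⟩
  rintro u ⟨hu, hux⟩ v ⟨hv, hvx⟩
  obtain ⟨f, h0, hn, hf⟩ := hT.exists_tracesPath hu hv
  have hne : ∀ t ≤ T.dist u v, f t ≠ x := by
    rintro t ht rfl
    rcases Nat.eq_zero_or_pos t with rfl | hpos
    · exact hux h0.symm
    · rw [hf.eq_of_mem_leaves hpos ht hx, hn] at hvx
      exact hvx rfl
  have := reachable_of_forall_adj (T := _root_.isolateVertex T x) (f := f)
    (Nat.zero_le (T.dist u v))
    fun s _ hs => ⟨hf.1 s hs, hne s hs.le, hne (s + 1) hs⟩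
  rwa [h0, hn] at this

section Order

variable {G T : SimpleGraph V} {S : Set V} {k : ℕ}

/-- The subgraph of `G` with vertex set `S` and the edges of `T`. -/
def subgraphOfLE (hTG : T ≤ G) (hS : ∀ ⦃u v⦄, T.Adj u v → u ∈ S) : G.Subgraph where
  verts := S
  Adj := T.Adj
  adj_sub h := hTG h
  edge_vert h := hS h
  symm := T.symm

lemma connected_subgraphOfLE (hTG : T ≤ G) (hS : ∀ ⦃u v⦄, T.Adj u v → u ∈ S) (hne : S.Nonempty)
    (hr : ∀ ⦃u⦄, u ∈ S → ∀ ⦃v⦄, v ∈ S → T.Reachable u v) : (subgraphOfLE hTG hS).Connected := by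
  have key : ∀ {u v : V} (_ : T.Walk u v) (hu : u ∈ S) (hv : v ∈ S),
      (subgraphOfLE hTG hS).coe.Reachable ⟨u, hu⟩ ⟨v, hv⟩ := by
    intro u v w
    induction w with
    | nil => exact fun _ _ => Reachable.refl _
    | cons h _ ih =>
      intro hu hv
      refine Reachable.trans (Adj.reachable ?_) (ih (hS h.symm) hv)
      exact h
  rw [Subgraph.connected_iff]
  refine ⟨⟨?_⟩, hne⟩
  rintro ⟨u, hu⟩ ⟨v, hv⟩
  exact key (hr hu hv).some hu hv

lemma IsKEndedTree.ncard_le [Finite V] {H : G.Subgraph} (hH : IsKEndedTree G k H) :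
    H.verts.ncard ≤ maxKEndedOrder G k := by
  refine le_csSup ⟨Nat.card V, ?_⟩ ⟨H, hH, rfl⟩
  rintro _ ⟨K, -, rfl⟩
  exact Set.ncard_le_card _

lemma IsTreeOn.coe_isTree (hT : IsTreeOn T S) (hTG : T ≤ G) :
    (subgraphOfLE hTG hT.mem_of_adj).coe.IsTree := by
  refine ⟨(connected_subgraphOfLE hTG hT.mem_of_adj hT.nonempty hT.reachable).coe, ?_⟩
  exact hT.isAcyclic.comap ⟨Subtype.val, fun h => h⟩ Subtype.val_injective

lemma IsTreeOn.ncard_le_maxKEndedOrder [Finite V] (hT : IsTreeOn T S) (hTG : T ≤ G)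
    (hk : (leaves T).ncard ≤ k) : S.ncard ≤ maxKEndedOrder G k := by
  refine IsKEndedTree.ncard_le (H := subgraphOfLE hTG hT.mem_of_adj) (Or.inl ⟨?_, ?_⟩)
  · exact hT.coe_isTree hTG
  · exact (Set.ncard_le_ncard (fun v hv => hv.2) (Set.toFinite _)).trans hk

lemma IsTreeOn.ncard_edgeSet [Finite V] (hT : IsTreeOn T S) :
    T.edgeSet.ncard + 1 = S.ncard := by
  have := (isTree_iff_connected_and_card.1 (hT.coe_isTree le_rfl)).2
  have hcard : Nat.card (subgraphOfLE le_rfl hT.mem_of_adj).verts = S.ncard := rfl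
  rw [hcard] at this
  rw [← this, Nat.card_coe_set_eq,
    ← Set.ncard_image_of_injective _ (Sym2.map.injective Subtype.val_injective)]
  congr 2
  ext e
  constructor
  · induction e with
    | h u v =>
      intro h
      exact ⟨s(⟨u, hT.mem_of_adj h⟩, ⟨v, hT.mem_of_adj (Adj.symm h)⟩), h, rfl⟩
  · rintro ⟨e, he, rfl⟩
    induction e with
    | h u v => exact he

lemma ncard_le_maxKEndedOrder_of_cycle [Finite V] (hk : 1 ≤ k) (hTG : T ≤ G)
    (hS : ∀ ⦃u v⦄, T.Adj u v → u ∈ S) (hne : S.Nonempty)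
    (hr : ∀ ⦃u⦄, u ∈ S → ∀ ⦃v⦄, v ∈ S → T.Reachable u v)
    (hc : S.ncard ≤ 2 ∨ ∀ v ∈ S, (T.neighborSet v).ncard = 2) :
    S.ncard ≤ maxKEndedOrder G k :=
  IsKEndedTree.ncard_le (H := subgraphOfLE hTG hS)
    (Or.inr ⟨hk, connected_subgraphOfLE hTG hS hne hr, hc⟩)

lemma isTreeOn_spanningCoe {H : G.Subgraph} (hH : H.coe.IsTree) :
    IsTreeOn H.spanningCoe H.verts := by
  refine ⟨?_, fun u v h => H.edge_vert h, ?_, ?_⟩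
  · obtain ⟨⟨v, hv⟩⟩ := hH.connected.nonempty
    exact ⟨v, hv⟩
  · intro u hu v hv
    exact (hH.connected.preconnected ⟨u, hu⟩ ⟨v, hv⟩).map
      (⟨Subtype.val, fun h => h⟩ : H.coe →g H.spanningCoe)
  · intro v w hw
    have hsupp : ∀ x ∈ w.support, x ∈ H.verts := by
      intro x hx
      obtain ⟨e, he, hxe⟩ := (Walk.mem_support_iff_exists_mem_edges_of_not_nil hw.not_nil).1 hx
      exact H.mem_verts_of_mem_edge (by simpa using w.edges_subset_edgeSet he) hxe
    have hind : (H.spanningCoe.induce H.verts).IsAcyclic :=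
      hH.isAcyclic.comap ⟨id, fun h => h⟩ Function.injective_id
    refine hind (w.induce H.verts hsupp) (Walk.IsCycle.of_map (f := (Embedding.induce _).toHom) ?_)
    rwa [Walk.map_induce]

lemma exists_isTreeOn_of_lt [Finite V] (hk : 1 ≤ k) [Nonempty V]
    (hlt : maxKEndedOrder G k < maxKEndedOrder G (k + 1)) :
    ∃ T S, IsTreeOn T S ∧ T ≤ G ∧ S.ncard = maxKEndedOrder G (k + 1) ∧
      (leaves T).ncard ≤ k + 1 := by
  obtain ⟨H, hH, hcard⟩ : maxKEndedOrder G (k + 1) ∈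
      {n | ∃ H : G.Subgraph, IsKEndedTree G (k + 1) H ∧ H.verts.ncard = n} := by
    refine Nat.sSup_mem ?_ ⟨Nat.card V, ?_⟩
    · exact ⟨_, G.singletonSubgraph (Classical.arbitrary V),
        Or.inr ⟨by omega, Subgraph.singletonSubgraph_connected, Or.inl (by simp)⟩, rfl⟩
    · rintro _ ⟨K, -, rfl⟩
      exact Set.ncard_le_card _
  rcases hH with ⟨hH, hl⟩ | ⟨-, hH⟩
  · refine ⟨H.spanningCoe, H.verts, isTreeOn_spanningCoe hH, H.spanningCoe_le, hcard, ?_⟩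
    refine le_trans (le_of_eq ?_) hl
    unfold endVertexCount
    congr 1
    ext v
    exact ⟨fun hv => ⟨(isTreeOn_spanningCoe hH).mem_of_mem_leaves hv, hv⟩, fun hv => hv.2⟩
  · have := IsKEndedTree.ncard_le (k := k) (Or.inr ⟨hk, hH⟩)
    omega

end Order

lemma isolateVertex_neighborSet {T : SimpleGraph V} {x v : V} (hv : v ≠ x) (hvx : ¬ T.Adj v x) :
    (isolateVertex T x).neighborSet v = T.neighborSet v := by
  ext w
  simp only [mem_neighborSet]
  refine ⟨fun h => h.1, fun h => ⟨h, hv, ?_⟩⟩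
  rintro rfl
  exact hvx h

lemma isolateVertex_neighborSet_of_adj {T : SimpleGraph V} {x v : V} (hvx : T.Adj v x) :
    (isolateVertex T x).neighborSet v = T.neighborSet v \ {x} := by
  ext w
  simp only [mem_neighborSet, Set.mem_sdiff, Set.mem_singleton_iff]
  exact ⟨fun h => ⟨h.1, h.2.2⟩, fun h => ⟨h.1, hvx.ne, h.2⟩⟩

lemma leaves_isolateVertex_subset {T : SimpleGraph V} {x y : V} (hx : x ∈ leaves T)
    (hxy : T.Adj x y) : leaves (isolateVertex T x) ⊆ insert y (leaves T \ {x}) := by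
  intro v hv
  by_cases hvy : v = y
  · exact Or.inl hvy
  have hvx : v ≠ x := by
    rintro rfl
    obtain ⟨w, hw⟩ := mem_leaves_iff.1 hv
    have : w ∈ (isolateVertex T v).neighborSet v := hw ▸ Set.mem_singleton w
    exact this.2.1 rfl
  refine Or.inr ⟨?_, hvx⟩
  have hna : ¬ T.Adj v x := fun h => hvy (eq_of_mem_leaves hx h.symm hxy)
  change ((isolateVertex T x).neighborSet v).ncard = 1 at hv
  rwa [isolateVertex_neighborSet hvx hna] at hv

lemma ncard_insert_diff_singleton_le [Finite V] {A : Set V} {x y : V} (hx : x ∈ A) :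
    (insert y (A \ {x})).ncard ≤ A.ncard := by
  have h1 := Set.ncard_insert_le y (A \ {x})
  have h2 := Set.ncard_sdiff_singleton_add_one hx (Set.toFinite _)
  omega

lemma swapEdge_le {G T : SimpleGraph V} {a b u v : V} (hTG : T ≤ G) (huv : G.Adj u v) :
    swapEdge T a b u v ≤ G := by
  intro p q h
  rcases (swapEdge_adj huv.ne).1 h with h | ⟨rfl, rfl⟩ | ⟨rfl, rfl⟩
  · exact hTG h.1
  · exact huv
  · exact huv.symm

/-- Closing a path whose interior vertices all have degree two, and whose ends are adjacent
end-vertices of the tree, gives a spanning cycle. -/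
lemma IsTreeOn.ncard_le_of_adj_leaves_of_path [Finite V] {G T : SimpleGraph V} {S : Set V} {k : ℕ}
    (hk : 1 ≤ k) (hT : IsTreeOn T S) (hTG : T ≤ G) {f : ℕ → V} {n : ℕ} (hf : TracesPath T f n)
    (h0 : f 0 ∈ leaves T) (hn : f n ∈ leaves T) (hadj : G.Adj (f 0) (f n))
    (hnT : ¬ T.Adj (f 0) (f n))
    (hdeg : ∀ t, 0 < t → t < n → (T.neighborSet (f t)).ncard ≤ 2) :
    S.ncard ≤ maxKEndedOrder G k := by
  have hn0 : n ≠ 0 := fun h => hadj.ne (by rw [h])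
  have hnbr : ∀ t, 0 < t → t < n → T.neighborSet (f t) = {f (t - 1), f (t + 1)} := by
    intro t ht htn
    have h1 := (hf.1 (t - 1) (by omega)).symm
    rw [Nat.sub_add_cancel ht] at h1
    have h2 := hf.1 t htn
    have hne : f (t - 1) ≠ f (t + 1) := fun e => by
      have := hf.2 _ (by omega) _ (by omega) e
      omega
    refine (Set.eq_of_subset_of_ncard_le ?_ ?_ (Set.toFinite _)).symm
    · rintro w (rfl | rfl)
      · exact h1
      · exact h2
    · rw [Set.ncard_pair hne]
      exact hdeg t ht htn
  have hadj0 : T.Adj (f 0) (f 1) := hf.1 0 (by omega)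
  have hadjn : T.Adj (f n) (f (n - 1)) := by
    have := (hf.1 (n - 1) (by omega)).symm
    rwa [Nat.sub_add_cancel (by omega)] at this
  have hclosed : ∀ w, T.Reachable (f 0) w → ∃ t ≤ n, f t = w := by
    intro w hw
    obtain ⟨p⟩ := hw.symm
    generalize hz : f 0 = z at p
    induction p with
    | nil => exact ⟨0, by omega, hz⟩
    | cons h p ih =>
      rename_i a b c
      obtain ⟨t, ht, rfl⟩ := ih (hz ▸ p.reachable.symm) hz
      rcases Nat.eq_zero_or_pos t with rfl | hpos
      · exact ⟨1, by omega, eq_of_mem_leaves h0 hadj0 h.symm⟩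
      rcases ht.lt_or_eq with hlt | rfl
      · have : a ∈ T.neighborSet (f t) := h.symm
        rw [hnbr t hpos hlt] at this
        rcases this with rfl | rfl
        · exact ⟨t - 1, by omega, rfl⟩
        · exact ⟨t + 1, by omega, rfl⟩
      · exact ⟨t - 1, by omega, eq_of_mem_leaves hn hadjn h.symm⟩
  have hS0 : f 0 ∈ S := hT.mem_of_mem_leaves h0
  have hSn : f n ∈ S := hT.mem_of_mem_leaves hn
  have hle : T ≤ T ⊔ edge (f 0) (f n) := le_sup_left
  refine ncard_le_maxKEndedOrder_of_cycle (T := T ⊔ edge (f 0) (f n)) hk ?_ ?_ hT.nonempty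
    (fun u hu v hv => (hT.reachable hu hv).mono hle) (Or.inr ?_)
  · refine sup_le hTG fun p q h => ?_
    rcases (edge_adj _ _ _ _).1 h with ⟨⟨rfl, rfl⟩ | ⟨rfl, rfl⟩, -⟩
    · exact hadj
    · exact hadj.symm
  · intro p q h
    rcases h with h | h
    · exact hT.mem_of_adj h
    · rcases (edge_adj _ _ _ _).1 h with ⟨⟨rfl, rfl⟩ | ⟨rfl, rfl⟩, -⟩ <;> assumption
  · intro w hw
    obtain ⟨t, ht, rfl⟩ := hclosed w (hT.reachable hS0 hw)
    rw [Set.ncard_eq_two]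
    rcases Nat.eq_zero_or_pos t with rfl | hpos
    · refine ⟨f 1, f n, fun e => hnT (e ▸ hadj0), ?_⟩
      ext w
      simp only [mem_neighborSet, sup_adj, edge_adj, Set.mem_insert_iff, Set.mem_singleton_iff]
      constructor
      · rintro (h | h)
        · exact Or.inl (eq_of_mem_leaves h0 h hadj0)
        · have := hadj.ne
          grind
      · rintro (rfl | rfl)
        · exact Or.inl hadj0
        · exact Or.inr ⟨Or.inl ⟨trivial, rfl⟩, hadj.ne⟩
    rcases ht.lt_or_eq with hlt | rfl
    · refine ⟨f (t - 1), f (t + 1), fun e => ?_, ?_⟩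
      · have := hf.2 _ (by omega) _ (by omega) e
        omega
      · rw [← hnbr t hpos hlt]
        have e1 : f t ≠ f 0 := fun e => by
          have := hf.2 _ (by omega) _ (by omega) e
          omega
        have e2 : f t ≠ f n := fun e => by
          have := hf.2 _ (by omega) _ (by omega) e
          omega
        ext w
        simp [edge_adj, e1, e2]
    · refine ⟨f (t - 1), f 0, fun e => hnT (e ▸ hadjn).symm, ?_⟩
      ext w
      simp only [mem_neighborSet, sup_adj, edge_adj, Set.mem_insert_iff, Set.mem_singleton_iff]
      constructor
      · rintro (h | h)
        · exact Or.inl (eq_of_mem_leaves hn h hadjn)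
        · have := hadj.ne
          grind
      · rintro (rfl | rfl)
        · exact Or.inl hadjn
        · exact Or.inr ⟨Or.inr ⟨trivial, rfl⟩, hadj.ne'⟩

lemma IsTreeOn.ncard_le_two_of_adj_leaves [Finite V] {T : SimpleGraph V} {S : Set V}
    (hT : IsTreeOn T S) {u v : V} (hu : u ∈ leaves T) (hv : v ∈ leaves T) (huv : T.Adj u v) :
    S.ncard ≤ 2 := by
  have hsub : S ⊆ {u, v} := by
    intro w hw
    obtain ⟨p⟩ := hT.reachable hw (hT.mem_of_mem_leaves hu)
    clear hw
    induction p with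
    | nil => simp
    | cons h _ ih =>
      rcases ih hu huv with rfl | rfl
      · exact Or.inr (eq_of_mem_leaves hu h.symm huv)
      · exact Or.inl (eq_of_mem_leaves hv h.symm huv.symm)
  exact (Set.ncard_le_ncard hsub (Set.toFinite _)).trans
    (Set.ncard_insert_le _ _ |>.trans (by simp))

/-- If two end-vertices of a `(k + 1)`-ended tree are adjacent in `G`, then `G` has a `k`-ended tree
on the same vertices. -/
lemma IsTreeOn.ncard_le_of_adj_leaves [Finite V] {G T : SimpleGraph V} {S : Set V} {k : ℕ}
    (hk : 1 ≤ k) (hT : IsTreeOn T S) (hTG : T ≤ G) (hl : (leaves T).ncard ≤ k + 1) {u v : V}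
    (hu : u ∈ leaves T) (hv : v ∈ leaves T) (huv : G.Adj u v) :
    S.ncard ≤ maxKEndedOrder G k := by
  have huS := hT.mem_of_mem_leaves hu
  have hvS := hT.mem_of_mem_leaves hv
  by_cases hadj : T.Adj u v
  · exact ncard_le_maxKEndedOrder_of_cycle hk hTG hT.mem_of_adj hT.nonempty hT.reachable
      (Or.inl (hT.ncard_le_two_of_adj_leaves hu hv hadj))
  obtain ⟨f, h0, hn, hf⟩ := hT.exists_tracesPath huS hvS
  set n := T.dist u v
  by_cases hdeg : ∀ t, 0 < t → t < n → (T.neighborSet (f t)).ncard ≤ 2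
  · subst h0
    rw [← hn] at hv huv hadj
    exact hT.ncard_le_of_adj_leaves_of_path hk hTG hf hu hv huv hadj hdeg
  push Not at hdeg
  obtain ⟨t, ht, htn, hb⟩ := hdeg
  obtain ⟨s, rfl⟩ : ∃ s, t = s + 1 := ⟨t - 1, by omega⟩
  have hdel : ∀ r < n, r ≠ s → (T.deleteEdges {s(f s, f (s + 1))}).Adj (f r) (f (r + 1)) := by
    intro r hr hrs
    rw [deleteEdges_adj]
    refine ⟨hf.1 r hr, ?_⟩
    rw [Set.mem_singleton_iff, Sym2.eq_iff]
    rintro (⟨e, -⟩ | ⟨e1, e2⟩)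
    · exact hrs (hf.2 _ (by omega) _ (by omega) e)
    · have := hf.2 _ (by omega) _ (by omega) e1
      have := hf.2 _ (by omega) _ (by omega) e2
      omega
  have hab := hf.1 s (by omega)
  have hua := reachable_of_forall_adj (T := T.deleteEdges {s(f s, f (s + 1))}) (f := f)
    (Nat.zero_le s) fun r _ hr => hdel r (by omega) (by omega)
  have hbv := reachable_of_forall_adj (T := T.deleteEdges {s(f s, f (s + 1))}) (f := f)
    (show s + 1 ≤ n by omega) fun r hr hr' => hdel r (by omega) (by omega)
  rw [h0] at hua
  rw [hn] at hbv
  have hT' := hT.swapEdge huS hvS huv.ne hab hua hbv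
  refine hT'.ncard_le_maxKEndedOrder (swapEdge_le hTG huv) ?_
  have hsub : leaves (_root_.swapEdge T (f s) (f (s + 1)) u v) ⊆
      insert (f s) ((leaves T \ {u}) \ {v}) := by
    intro w hw
    by_cases hws : w = f s
    · exact Or.inl hws
    have hnbr : ∀ y, T.Adj w y → ¬ (w = f (s + 1) ∧ y = f s) →
        (_root_.swapEdge T (f s) (f (s + 1)) u v).Adj w y := fun y hy hy' =>
      (swapEdge_adj huv.ne).2 (Or.inl ⟨hy, fun h => hws h.1, hy'⟩)
    by_cases hwt : w = f (s + 1)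
    · subst hwt
      exfalso
      have hsub : T.neighborSet (f (s + 1)) \ {f s} ⊆
          (_root_.swapEdge T (f s) (f (s + 1)) u v).neighborSet (f (s + 1)) :=
        fun y hy => hnbr y hy.1 fun h => hy.2 h.2
      have h1 := Set.ncard_le_ncard hsub (Set.toFinite _)
      have h2 := Set.ncard_sdiff_singleton_add_one
        (show f s ∈ T.neighborSet (f (s + 1)) from hab.symm)
        (Set.toFinite _)
      have h3 : ((_root_.swapEdge T (f s) (f (s + 1)) u v).neighborSet (f (s + 1))).ncard = 1 := hw
      omega
    have hwu : w ≠ u := by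
      rintro rfl
      obtain ⟨y, hy⟩ := mem_leaves_iff.1 hu
      have hwy : T.Adj w y := show y ∈ T.neighborSet w from hy ▸ Set.mem_singleton y
      have := eq_of_mem_leaves hw (hnbr y hwy fun h => hwt h.1)
        ((swapEdge_adj huv.ne).2 (Or.inr (Or.inl ⟨rfl, rfl⟩)))
      exact hadj (this ▸ hwy)
    have hwv : w ≠ v := by
      rintro rfl
      obtain ⟨y, hy⟩ := mem_leaves_iff.1 hv
      have hwy : T.Adj w y := show y ∈ T.neighborSet w from hy ▸ Set.mem_singleton y
      have := eq_of_mem_leaves hw (hnbr y hwy fun h => hwt h.1)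
        ((swapEdge_adj huv.ne).2 (Or.inr (Or.inr ⟨rfl, rfl⟩)))
      exact hadj (this ▸ hwy).symm
    refine Or.inr ⟨⟨?_, hwu⟩, hwv⟩
    have : (_root_.swapEdge T (f s) (f (s + 1)) u v).neighborSet w = T.neighborSet w := by
      ext y
      refine ⟨fun h => ?_, fun h => hnbr y h fun h' => hwt h'.1⟩
      rcases (swapEdge_adj huv.ne).1 h with h | h | h
      · exact h.1
      · exact absurd h.1 hwu
      · exact absurd h.1 hwv
    change (_ : Set V).ncard = 1 at hw
    rwa [this] at hw
  have h1 := Set.ncard_le_ncard hsub (Set.toFinite _)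
  have h2 := Set.ncard_insert_le (f s) ((leaves T \ {u}) \ {v})
  have h3 := Set.ncard_sdiff_singleton_add_one hu (Set.toFinite _)
  have h4 := Set.ncard_sdiff_singleton_add_one (show v ∈ leaves T \ {u} from ⟨hv, huv.ne'⟩)
    (Set.toFinite _)
  omega

/-- Every tree in `G` of order more than `t` with at most `k + 1` end-vertices has exactly `k + 1`
of them, and they are independent in `G`. -/
def RigidAbove (G : SimpleGraph V) (k t : ℕ) : Prop :=
  ∀ ⦃T : SimpleGraph V⦄ ⦃S : Set V⦄, IsTreeOn T S → T ≤ G → t < S.ncard →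
    (leaves T).ncard ≤ k + 1 → (leaves T).ncard = k + 1 ∧ IsIndSet G (leaves T)

lemma rigidAbove_maxKEndedOrder [Finite V] (G : SimpleGraph V) {k : ℕ} (hk : 1 ≤ k) :
    RigidAbove G k (maxKEndedOrder G k) := by
  intro T S hT hTG hS hl
  refine ⟨le_antisymm hl ?_, fun u hu v hv huv => ?_⟩
  · by_contra h
    exact absurd (hT.ncard_le_maxKEndedOrder hTG (k := k) (by omega)) (by omega)
  · exact absurd (hT.ncard_le_of_adj_leaves hk hTG hl hu hv huv) (by omega)

namespace RigidAbove

variable [Finite V] {G T : SimpleGraph V} {S : Set V} {k t : ℕ}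

/-- Walking away from an end-vertex, one meets only vertices of degree two that are not adjacent
in `G` to other end-vertices, as long as enough vertices remain. -/
lemma near_leaf (hG : RigidAbove G k t) (hTG : T ≤ G) (hT : IsTreeOn T S)
    (hl : (leaves T).ncard ≤ k + 1) {f : ℕ → V} {d : ℕ} (hf : TracesPath T f d)
    (hx : f 0 ∈ leaves T) (hS : t + d < S.ncard) :
    (0 < d → (T.neighborSet (f d)).ncard = 2) ∧
      ∀ y ∈ leaves T, y ≠ f 0 → ¬ G.Adj (f d) y := by
  induction d generalizing T S f with
  | zero => exact ⟨fun h => absurd h (by omega), fun y hy _ => (hG hT hTG hS hl).2 hx hy⟩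
  | succ d ih =>
    have hxy : T.Adj (f 0) (f 1) := hf.1 0 (by omega)
    have hsub := leaves_isolateVertex_subset hx hxy
    have hT' := hT.isolateVertex hx
    have hS' := Set.ncard_sdiff_singleton_add_one (hT.mem_of_mem_leaves hx) (Set.toFinite _)
    have hTG' := (isolateVertex_le T (f 0)).trans hTG
    have hl' : (leaves (isolateVertex T (f 0))).ncard ≤ k + 1 :=
      ((Set.ncard_le_ncard hsub (Set.toFinite _)).trans
        (ncard_insert_diff_singleton_le hx)).trans hl
    have hrigid := (hG hT' hTG' (by omega) hl').1
    have hy : f 1 ∈ leaves (isolateVertex T (f 0)) := by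
      by_contra hy
      have hsub' : leaves (isolateVertex T (f 0)) ⊆ leaves T \ {f 0} := fun v hv =>
        (hsub hv).resolve_left fun e => hy (e ▸ hv)
      have h1 := Set.ncard_le_ncard hsub' (Set.toFinite _)
      have h2 := Set.ncard_sdiff_singleton_add_one hx (Set.toFinite _)
      omega
    have hdeg1 : (T.neighborSet (f 1)).ncard = 2 := by
      have h1 : ((isolateVertex T (f 0)).neighborSet (f 1)).ncard = 1 := hy
      rw [isolateVertex_neighborSet_of_adj hxy.symm] at h1
      have h2 := Set.ncard_sdiff_singleton_add_one
        (show f 0 ∈ T.neighborSet (f 1) from hxy.symm) (Set.toFinite _)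
      omega
    have hsame : ∀ v, v ≠ f 0 → v ≠ f 1 →
        (isolateVertex T (f 0)).neighborSet v = T.neighborSet v := fun v h0 h1 =>
      isolateVertex_neighborSet h0 fun h => h1 (eq_of_mem_leaves hx h.symm hxy)
    have hf' : TracesPath (isolateVertex T (f 0)) (fun s => f (1 + s)) d := by
      have h := hf.shift (a := 1) (b := d) (by omega)
      refine ⟨fun s hs => ⟨h.1 s hs, fun e => ?_, fun e => ?_⟩, h.2⟩
      · have := hf.2 _ (by omega) _ (by omega) e
        omega
      · have := hf.2 _ (by omega) _ (by omega) e
        omega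
    obtain ⟨hd, hadj⟩ := ih hTG' hT' hl' hf' hy (by omega)
    have e1 : 1 + d = d + 1 := by omega
    simp only [e1] at hd hadj
    refine ⟨fun _ => ?_, fun y hyl hyx => ?_⟩
    · rcases Nat.eq_zero_or_pos d with rfl | hpos
      · exact hdeg1
      · rw [← hd hpos, hsame]
        · intro e
          have := hf.2 _ (by omega) _ (by omega) e
          omega
        · intro e
          have := hf.2 _ (by omega) _ (by omega) e
          omega
    · have hy1 : y ≠ f 1 := by
        rintro rfl
        have : (T.neighborSet (f 1)).ncard = 1 := hyl
        omega
      refine hadj y ?_ hy1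
      change ((isolateVertex T (f 0)).neighborSet y).ncard = 1
      rw [hsame y hyx hy1]
      exact hyl

/-- If an end-vertex `f n` is adjacent in `G` to a vertex `f 0`, then the path from `f 0` to `f n`
starts with vertices of degree two that are not adjacent in `G` to other end-vertices. -/
lemma near_neighbor_of_leaf (hG : RigidAbove G k t) (hTG : T ≤ G) (hT : IsTreeOn T S)
    (hl : (leaves T).ncard ≤ k + 1) {f : ℕ → V} {n d : ℕ} (hf : TracesPath T f n)
    (hx : f n ∈ leaves T) (hadj : G.Adj (f n) (f 0)) (hd : 0 < d) (hdn : d ≤ n)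
    (hS : t + d ≤ S.ncard) :
    (d < n → (T.neighborSet (f d)).ncard = 2) ∧
      ∀ y ∈ leaves T, y ≠ f n → ¬ G.Adj (f d) y := by
  have hind := (hG hT hTG (by omega) hl).2
  rcases hdn.lt_or_eq with hlt | rfl
  swap
  · exact ⟨fun h => absurd h (lt_irrefl _), fun y hy _ => hind hx hy⟩
  have hne : ∀ a ≤ n, ∀ b ≤ n, a ≠ b → f a ≠ f b := fun a ha b hb hab e => hab (hf.2 a ha b hb e)
  have hzw : T.Adj (f 0) (f 1) := hf.1 0 (by omega)
  have hzx : f 0 ≠ f n := hadj.ne'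
  have hx0 : ¬ T.Adj (f n) (f 0) := by
    have h1 := hf.1 (n - 1) (by omega)
    rw [Nat.sub_add_cancel (by omega)] at h1
    intro h
    exact hne _ (by omega) _ (by omega) (by omega) (eq_of_mem_leaves hx h1.symm h)
  have hdel : ∀ s, 1 ≤ s → s < n →
      (T.deleteEdges {s(f 0, f 1)}).Adj (f s) (f (s + 1)) := by
    intro s hs hsn
    rw [deleteEdges_adj, Set.mem_singleton_iff, Sym2.eq_iff]
    refine ⟨hf.1 s hsn, ?_⟩
    rintro (⟨e, -⟩ | ⟨-, e⟩)
    · exact hne _ (by omega) _ (by omega) (by omega) e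
    · exact hne _ (by omega) _ (by omega) (by omega) e
  have hT' := hT.swapEdge (hT.mem_of_adj hzw) (hT.mem_of_mem_leaves hx) hzx hzw
    (Reachable.refl _) (reachable_of_forall_adj (show 1 ≤ n by omega) hdel)
  have hTG' := swapEdge_le (a := f 0) (b := f 1) hTG hadj.symm
  have hadj' := fun p q => swapEdge_adj (T := T) (a := f 0) (b := f 1) (p := p) (q := q) hzx
  set T' := swapEdge T (f 0) (f 1) (f 0) (f n)
  have hsame : ∀ v, v ≠ f 0 → v ≠ f 1 → v ≠ f n → T'.neighborSet v = T.neighborSet v := by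
    intro v h0 h1 h2
    ext y
    simp only [mem_neighborSet, hadj', h0, h1, h2]
    simp
  have hw : T'.neighborSet (f 1) = T.neighborSet (f 1) \ {f 0} := by
    have h0 := hzw.ne'
    have h2 := hne 1 (by omega) n le_rfl (by omega)
    ext y
    simp only [mem_neighborSet, hadj', h0, h2, Set.mem_sdiff, Set.mem_singleton_iff]
    simp
  have hz0 : f 0 ∉ leaves T := fun h => hind h hx hadj.symm
  have hsub : leaves T' ⊆ insert (f 1) (leaves T \ {f n}) := by
    intro v hv
    by_cases h1 : v = f 1
    · exact Or.inl h1
    have h2 : v ≠ f n := by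
      rintro rfl
      have e1 := hf.1 (n - 1) (by omega)
      rw [Nat.sub_add_cancel (by omega)] at e1
      have := eq_of_mem_leaves hv
        ((hadj' _ _).2 (Or.inl ⟨e1.symm, fun h => hzx h.1.symm, fun h => h1 h.1⟩))
        ((hadj' _ _).2 (Or.inr (Or.inr ⟨rfl, rfl⟩)))
      exact hne _ (by omega) _ (by omega) (by omega) this
    refine Or.inr ⟨?_, h2⟩
    by_cases h0 : v = f 0
    · subst h0
      have e : T'.neighborSet (f 0) = insert (f n) (T.neighborSet (f 0) \ {f 1}) := by
        ext y
        have := hzw.ne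
        simp only [mem_neighborSet, hadj', Set.mem_insert_iff, Set.mem_sdiff,
          Set.mem_singleton_iff]
        grind
      have hv' : (T'.neighborSet (f 0)).ncard = 1 := hv
      rw [e] at hv'
      have e1 := Set.ncard_insert_of_notMem (a := f n) (s := T.neighborSet (f 0) \ {f 1})
        (fun h => hx0 h.1.symm) (Set.toFinite _)
      have e2 := Set.ncard_sdiff_singleton_add_one
        (show f 1 ∈ T.neighborSet (f 0) from hzw) (Set.toFinite _)
      change (T.neighborSet (f 0)).ncard = 1
      omega
    · change (T'.neighborSet v).ncard = 1 at hv
      rwa [hsame v h0 h1 h2] at hv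
  have hl' : (leaves T').ncard ≤ k + 1 :=
    ((Set.ncard_le_ncard hsub (Set.toFinite _)).trans (ncard_insert_diff_singleton_le hx)).trans hl
  have hrigid := (hG hT' hTG' (by omega) hl').1
  have hy : f 1 ∈ leaves T' := by
    by_contra hy
    have hsub' : leaves T' ⊆ leaves T \ {f n} := fun v hv =>
      (hsub hv).resolve_left fun e => hy (e ▸ hv)
    have h1 := Set.ncard_le_ncard hsub' (Set.toFinite _)
    have h2 := Set.ncard_sdiff_singleton_add_one hx (Set.toFinite _)
    omega
  have hdeg1 : (T.neighborSet (f 1)).ncard = 2 := by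
    have h1 : (T'.neighborSet (f 1)).ncard = 1 := hy
    rw [hw] at h1
    have h2 := Set.ncard_sdiff_singleton_add_one
      (show f 0 ∈ T.neighborSet (f 1) from hzw.symm) (Set.toFinite _)
    omega
  have hf' : TracesPath T' (fun s => f (1 + s)) (d - 1) := by
    have h := hf.shift (a := 1) (b := d - 1) (by omega)
    refine ⟨fun s hs => (hadj' _ _).2 (Or.inl ⟨h.1 s hs, fun e => ?_, fun e => ?_⟩), h.2⟩
    · exact hne _ (by omega) _ (by omega) (by omega) e.1
    · exact hne _ (by omega) _ (by omega) (by omega) e.2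
  obtain ⟨hd2, hna⟩ := hG.near_leaf hTG' hT' hl' hf' hy (by omega)
  have e1 : 1 + (d - 1) = d := by omega
  simp only [e1] at hd2 hna
  refine ⟨fun _ => ?_, fun y hyl hyx => ?_⟩
  · rcases Nat.eq_or_lt_of_le (show 1 ≤ d from hd) with rfl | hpos
    · exact hdeg1
    · rw [← hd2 (by omega), hsame] <;> exact hne _ (by omega) _ (by omega) (by omega)
  · have hy1 : y ≠ f 1 := by
      rintro rfl
      have : (T.neighborSet (f 1)).ncard = 1 := hyl
      omega
    refine hna y ?_ hy1
    change (T'.neighborSet y).ncard = 1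
    rw [hsame y (fun e => hz0 (e ▸ hyl)) hy1 hyx]
    exact hyl

end RigidAbove

namespace TracesPath

variable {T : SimpleGraph V} {f g : ℕ → V} {n p r q : ℕ}

lemma adj_pred (hf : TracesPath T f n) {t : ℕ} (ht : t + 1 ≤ n) : T.Adj (f (t + 1)) (f t) :=
  (hf.1 t ht).symm

lemma ne_of_ne (hf : TracesPath T f n) {s t : ℕ} (hs : s ≤ n) (ht : t ≤ n) (hst : s ≠ t) :
    f s ≠ f t := fun e => hst (hf.2 s hs t ht e)

/-- Two paths with the same first edge stay together along vertices of degree two. -/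
lemma eq_forward (hf : TracesPath T f n) (hg : TracesPath T g p) (h0 : g 0 = f 0)
    (h1 : g 1 = f 1) (hleaf : g p ∈ leaves T) (hp : 0 < p) (hr : r < n)
    (hdeg : ∀ t, 0 < t → t ≤ r → (T.neighborSet (f t)).ncard = 2) {t : ℕ} (ht : t ≤ r) :
    t < p ∧ g t = f t ∧ g (t + 1) = f (t + 1) := by
  induction t with
  | zero => exact ⟨hp, h0, h1⟩
  | succ t ih =>
    obtain ⟨htp, e0, e1⟩ := ih (by omega)
    have hd := hdeg (t + 1) (by omega) ht
    have hlt : t + 1 < p := by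
      refine lt_of_le_of_ne htp ?_
      rintro rfl
      have : (T.neighborSet (g (t + 1))).ncard = 1 := hleaf
      rw [e1] at this
      omega
    refine ⟨hlt, e1, eq_of_ncard_neighborSet_eq_two hd (a := f t) ?_ ?_ ?_ ?_ ?_⟩
    · exact hf.adj_pred (by omega)
    · exact e1 ▸ hg.1 (t + 1) hlt
    · exact hf.1 (t + 1) (by omega)
    · exact e0 ▸ hg.ne_of_ne (by omega) (by omega) (by omega)
    · exact hf.ne_of_ne (by omega) (by omega) (by omega)

/-- Two paths traversing an edge in the same direction came together along vertices of
degree two. -/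
lemma eq_backward (hf : TracesPath T f n) (hg : TracesPath T g p) (hr : r < n) (hq : q < p)
    (hqr : q ≤ r) (h0 : f r = g q) (h1 : f (r + 1) = g (q + 1))
    (hdeg : ∀ t, 0 < t → t ≤ r → (T.neighborSet (f t)).ncard = 2) {t : ℕ} (ht : t ≤ q + 1) :
    g t = f (r - q + t) := by
  have key : ∀ j ≤ q, f (r - j) = g (q - j) ∧ f (r - j + 1) = g (q - j + 1) := by
    intro j
    induction j with
    | zero => exact fun _ => ⟨h0, h1⟩
    | succ j ih =>
      intro hj
      obtain ⟨e0, e1⟩ := ih (by omega)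
      obtain ⟨a, ha⟩ : ∃ a, r - j = a + 1 := ⟨r - j - 1, by omega⟩
      obtain ⟨b, hb⟩ : ∃ b, q - j = b + 1 := ⟨q - j - 1, by omega⟩
      have ha' : r - (j + 1) = a := by omega
      have hb' : q - (j + 1) = b := by omega
      rw [ha, hb] at e0 e1
      rw [ha', hb']
      refine ⟨eq_of_ncard_neighborSet_eq_two (hdeg (a + 1) (by omega) (by omega))
        (a := f (a + 1 + 1)) ?_ ?_ ?_ ?_ ?_, e0⟩
      · exact hf.1 (a + 1) (by omega)
      · exact hf.adj_pred (by omega)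
      · exact e0 ▸ hg.adj_pred (by omega)
      · exact hf.ne_of_ne (by omega) (by omega) (by omega)
      · exact e1 ▸ hg.ne_of_ne (by omega) (by omega) (by omega)
  rcases ht.lt_or_eq with hlt | rfl
  · have := (key (q - t) (by omega)).1
    rw [show q - (q - t) = t by omega, show r - (q - t) = r - q + t by omega] at this
    exact this.symm
  · rw [← h1, show r - q + (q + 1) = r + 1 by omega]

/-- If two paths traverse an edge in opposite directions, then the first reaches the start of the
second, provided the second one reached the edge along vertices of degree two. -/
lemma eq_opposite (hf : TracesPath T f n) (hg : TracesPath T g p) (hr : r < n) (hq : q < p)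
    (hleaf : f n ∈ leaves T) (h0 : f r = g (q + 1)) (h1 : f (r + 1) = g q)
    (hdeg : ∀ t, 0 < t → t ≤ q → (T.neighborSet (g t)).ncard = 2) :
    r + q + 1 ≤ n ∧ f (r + q + 1) = g 0 := by
  have key : ∀ j ≤ q, r + j + 1 ≤ n ∧ f (r + j) = g (q - j + 1) ∧ f (r + j + 1) = g (q - j) := by
    intro j
    induction j with
    | zero => exact fun _ => ⟨hr, h0, h1⟩
    | succ j ih =>
      intro hj
      obtain ⟨hle, e0, e1⟩ := ih (by omega)
      obtain ⟨b, hb⟩ : ∃ b, q - j = b + 1 := ⟨q - j - 1, by omega⟩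
      have hb' : q - (j + 1) = b := by omega
      rw [hb] at e0 e1
      rw [hb']
      have hd := hdeg (b + 1) (by omega) (by omega)
      have hlt : r + j + 1 < n := by
        refine lt_of_le_of_ne hle ?_
        rintro rfl
        have : (T.neighborSet (f (r + j + 1))).ncard = 1 := hleaf
        rw [e1] at this
        omega
      refine ⟨by omega, e1, eq_of_ncard_neighborSet_eq_two hd (a := g (b + 1 + 1)) ?_ ?_ ?_ ?_ ?_⟩
      · exact hg.1 (b + 1) (by omega)
      · exact e1 ▸ hf.1 (r + j + 1) hlt
      · exact hg.adj_pred (by omega)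
      · exact e0 ▸ hf.ne_of_ne (by omega) (by omega) (by omega)
      · exact hg.ne_of_ne (by omega) (by omega) (by omega)
  obtain ⟨h, -, e⟩ := key q le_rfl
  exact ⟨h, by simpa using e⟩

end TracesPath

lemma exists_rank (V : Type*) : ∃ rank : Finset V → V → ℕ,
    ∀ D : Finset V, (∀ x ∈ D, rank D x < D.card) ∧ Set.InjOn (rank D) D := by
  classical
  refine ⟨fun D x => if h : x ∈ D then D.equivFin ⟨x, h⟩ else 0, fun D => ⟨?_, ?_⟩⟩
  · intro x hx
    simp [hx]
  · intro x hx y hy e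
    simp only [Finset.mem_coe] at hx hy
    simpa [hx, hy, Fin.val_inj] using e

/-- The key degree bound: among the edges of the tree, each adjacency in `G` of a chosen end-vertex
is charged to a private edge, and the first `l` edges at every other end-vertex stay free. -/
lemma RigidAbove.sum_degree_le [Fintype V] {G T : SimpleGraph V} [DecidableRel G.Adj] {S : Set V}
    {k t l : ℕ} (hG : RigidAbove G k t) (hTG : T ≤ G) (hT : IsTreeOn T S)
    (hl : (leaves T).ncard = k + 1) (hlpos : 1 ≤ l) (hS : t + l ≤ S.ncard)
    (hN : ∀ x ∈ leaves T, ∀ z, G.Adj x z → z ∈ S) {C : Finset V} (hC : ↑C ⊆ leaves T)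
    (hCne : C.Nonempty) (hCl : C.card ≤ l + 1) :
    ∑ x ∈ C, G.degree x + l * (k + 1 - C.card) + 1 ≤ S.ncard := by
  classical
  have hind := (hG hT hTG (by omega) hl.le).2
  have hLS : ∀ {x}, x ∈ leaves T → x ∈ S := hT.mem_of_mem_leaves
  obtain ⟨x₁, hx₁⟩ := hCne
  have hpath : ∀ z x, ∃ f : ℕ → V, z ∈ S → x ∈ S →
      f 0 = z ∧ f (T.dist z x) = x ∧ TracesPath T f (T.dist z x) := by
    intro z x
    by_cases h : z ∈ S ∧ x ∈ S
    · obtain ⟨f, hf⟩ := hT.exists_tracesPath h.1 h.2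
      exact ⟨f, fun _ _ => hf⟩
    · exact ⟨fun _ => z, fun h1 h2 => absurd ⟨h1, h2⟩ h⟩
  choose P hP using hpath
  obtain ⟨rank, hrank⟩ := exists_rank V
  -- the chosen end-vertices adjacent to `z` that lie in the same direction from `z` as `x`
  let D : V → V → Finset V := fun z x => {h ∈ C | G.Adj h z ∧ P z h 1 = P z x 1}
  have hD : ∀ {z x h}, h ∈ D z x ↔ h ∈ C ∧ G.Adj h z ∧ P z h 1 = P z x 1 := by
    intro z x h
    simp [D]
  have hdistpos : ∀ {z x}, z ∈ S → x ∈ S → z ≠ x → 0 < T.dist z x := fun hz hx hne =>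
    (hT.reachable hz hx).pos_dist_of_ne hne
  -- the arrow from `z` to `x` at position `r`
  let Arrow : V → V → ℕ → Prop := fun z x r => z ∈ S ∧ x ∈ C ∧ r < T.dist z x ∧
    ∀ s, 0 < s → s ≤ r → (T.neighborSet (P z x s)).ncard = 2
  let KindI : V → V → ℕ → Prop := fun z x r => x ∈ C ∧ G.Adj x z ∧ r = rank (D z x) x
  let KindU : V → V → ℕ → Prop := fun z x r => z ∈ leaves T ∧ z ∉ C ∧ x = x₁ ∧ r < l
  have near1 : ∀ {z x d}, x ∈ C → G.Adj x z → 0 < d → d ≤ l → d ≤ T.dist z x →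
      (d < T.dist z x → (T.neighborSet (P z x d)).ncard = 2) ∧
        ∀ y ∈ leaves T, y ≠ x → ¬ G.Adj (P z x d) y := by
    intro z x d hx hxz hd hdl hdn
    obtain ⟨h0, h1, hf⟩ := hP z x (hN x (hC hx) z hxz) (hLS (hC hx))
    have := hG.near_neighbor_of_leaf hTG hT hl.le hf (h1.symm ▸ hC hx)
      (by rw [h0, h1]; exact hxz) hd hdn (by omega)
    rwa [h1] at this
  have near2 : ∀ {z x d}, z ∈ leaves T → x ∈ S → d < l → d ≤ T.dist z x →
      (0 < d → (T.neighborSet (P z x d)).ncard = 2) ∧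
        ∀ y ∈ leaves T, y ≠ z → ¬ G.Adj (P z x d) y := by
    intro z x d hz hx hdl hdn
    obtain ⟨h0, h1, hf⟩ := hP z x (hLS hz) hx
    have := hG.near_leaf hTG hT hl.le (hf.shift (a := 0) (b := d) (by omega))
      (by simpa [h0] using hz) (by omega)
    simpa [h0] using this
  have memD : ∀ {z x r}, KindI z x r → x ∈ D z x := fun h => hD.2 ⟨h.1, h.2.1, rfl⟩
  have rank_lt : ∀ {z x r}, KindI z x r → r < (D z x).card := fun h =>
    h.2.2 ▸ (hrank _).1 _ (memD h)
  have cardD : ∀ z x, (D z x).card ≤ C.card := fun z x => Finset.card_filter_le _ _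
  -- all members of `D z x` are reached along the same initial segment
  have follow : ∀ {z x h r}, x ∈ C → G.Adj x z → h ∈ D z x → r < T.dist z x →
      (∀ s, 0 < s → s ≤ r → (T.neighborSet (P z x s)).ncard = 2) → ∀ s ≤ r,
      s < T.dist z h ∧ P z h s = P z x s ∧ P z h (s + 1) = P z x (s + 1) := by
    intro z x h r hx hxz hh hr hdeg s hs
    obtain ⟨hhC, hhz, hh1⟩ := hD.1 hh
    have hz := hN x (hC hx) z hxz
    obtain ⟨a0, a1, hf⟩ := hP z x hz (hLS (hC hx))
    obtain ⟨b0, b1, hg⟩ := hP z h hz (hLS (hC hhC))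
    exact hf.eq_forward hg (b0.trans a0.symm) hh1 (b1.symm ▸ hC hhC)
      (hdistpos hz (hLS (hC hhC)) hhz.ne') hr hdeg hs
  have arrowI : ∀ {z x r}, KindI z x r → Arrow z x r := by
    intro z x r h
    have hr := rank_lt h
    have hz := hN x (hC h.1) z h.2.1
    have hxS := hLS (hC h.1)
    have hrl : r ≤ l := by have := cardD z x; omega
    have hpos := hdistpos hz hxS h.2.1.ne'
    have hdeg : ∀ s, 0 < s → s ≤ r → s < T.dist z x → (T.neighborSet (P z x s)).ncard = 2 :=
      fun s h1 h2 h3 => (near1 h.1 h.2.1 h1 (by omega) h3.le).1 h3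
    have hlt : r < T.dist z x := by
      by_contra hge
      obtain ⟨y, hy, hyx⟩ := Finset.exists_mem_ne (show 1 < (D z x).card by omega) x
      have hyC := (hD.1 hy).1
      obtain ⟨a1, -, a2⟩ := follow h.1 h.2.1 hy (r := T.dist z x - 1) (by omega)
        (fun s h1 h2 => hdeg s h1 (by omega) (by omega)) _ le_rfl
      rw [Nat.sub_add_cancel hpos, (hP z x hz hxS).2.1] at a2
      obtain ⟨-, b1, hg⟩ := hP z y hz (hLS (hC hyC))
      have := hg.eq_of_mem_leaves hpos (by omega) (a2.symm ▸ hC h.1)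
      rw [this, b1] at a2
      exact hyx a2
    exact ⟨hz, h.1, hlt, fun s h1 h2 => hdeg s h1 h2 (by omega)⟩
  have arrowU : ∀ {z x r}, KindU z x r → Arrow z x r := by
    rintro z x r ⟨hz, hzC, rfl, hr⟩
    have hxS := hLS (hC hx₁)
    have hpos := hdistpos (hLS hz) hxS (fun e => hzC (e ▸ hx₁))
    have hlt : r < T.dist z x := by
      by_contra hge
      have h1 := (near2 hz hxS (d := T.dist z x) (by omega) le_rfl).1 hpos
      rw [(hP z x (hLS hz) hxS).2.1] at h1
      have h2 : (T.neighborSet x).ncard = 1 := hC hx₁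
      omega
    exact ⟨hLS hz, hx₁, hlt, fun s h1 h2 => (near2 hz hxS (by omega) (by omega)).1 h1⟩
  have arrow : ∀ {z x r}, KindI z x r ∨ KindU z x r → Arrow z x r := fun h =>
    h.elim arrowI arrowU
  have hsame : ∀ {z x r z' x' r'}, KindI z x r ∨ KindU z x r → KindI z' x' r' ∨ KindU z' x' r' →
      r' ≤ r → P z x r = P z' x' r' → P z x (r + 1) = P z' x' (r' + 1) →
      z = z' ∧ x = x' ∧ r = r' := by
    intro z x r z' x' r' hK hK' hle e0 e1
    obtain ⟨hz, hx, hr, hdeg⟩ := arrow hK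
    obtain ⟨hz', hx', hr', hdeg'⟩ := arrow hK'
    obtain ⟨a0, a1, hf⟩ := hP z x hz (hLS (hC hx))
    obtain ⟨b0, b1, hg⟩ := hP z' x' hz' (hLS (hC hx'))
    have hback : ∀ s ≤ r' + 1, P z' x' s = P z x (r - r' + s) := fun s hs =>
      hf.eq_backward hg hr hr' hle e0 e1 hdeg hs
    have hz'0 : z' = P z x (r - r') := by simpa [b0] using hback 0 (by omega)
    rcases hK' with hI' | hU'
    · rcases hK with hI | hU
      · rcases hle.lt_or_eq with hlt | rfl
        · exfalso
          have hrc := rank_lt hI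
          obtain ⟨y, hy, hyx⟩ := Finset.exists_mem_ne (show 1 < (D z x).card by omega) x'
          obtain ⟨hyC, hyz, -⟩ := hD.1 hy
          obtain ⟨c1, c2, -⟩ := follow hI.1 hI.2.1 hy hr hdeg (r - r') (by omega)
          have hcard := cardD z x
          refine (near1 hyC hyz (d := r - r') (by omega) (by omega) c1.le).2 x' (hC hx') hyx.symm ?_
          rw [c2, ← hz'0]
          exact hI'.2.1.symm
        · have hzz : z = z' := by rw [hz'0, Nat.sub_self, a0]
          subst hzz
          refine ⟨rfl, ?_, rfl⟩
          have h1 : P z x 1 = P z x' 1 := by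
            rw [hback 1 (by omega), Nat.sub_self]
          have hDD : D z x = D z x' := by
            ext y
            rw [hD, hD, h1]
          have e := hI.2.2.symm.trans hI'.2.2
          rw [hDD] at e
          exact (hrank _).2 (Finset.mem_coe.2 (hDD ▸ memD hI)) (Finset.mem_coe.2 (memD hI')) e
      · exfalso
        have hrl := hU.2.2.2
        refine (near2 hU.1 (hLS (hC hx)) (d := r - r') (by omega) (by omega)).2 x' (hC hx') ?_ ?_
        · rintro rfl
          exact hU.2.1 hx'
        · rw [← hz'0]
          exact hI'.2.1.symm
    · have hrr : r = r' := by
        by_contra hne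
        have h1 := hdeg (r - r') (by omega) (by omega)
        have h2 : (T.neighborSet z').ncard = 1 := hU'.1
        rw [← hz'0] at h1
        omega
      subst hrr
      have hzz : z = z' := by rw [hz'0, Nat.sub_self, a0]
      subst hzz
      rcases hK with hI | hU
      · exact absurd hI.2.1 (hind (hC hx) hU'.1)
      · exact ⟨rfl, hU.2.2.1.trans hU'.2.2.1.symm, rfl⟩
  have hmeet : ∀ {z x r z' x' r'}, Arrow z x r → Arrow z' x' r' →
      P z x r = P z' x' (r' + 1) → P z x (r + 1) = P z' x' r' →
      r + r' + 1 ≤ T.dist z x ∧ P z x (r + r' + 1) = z' := by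
    rintro z x r z' x' r' ⟨hz, hx, hr, hdeg⟩ ⟨hz', hx', hr', hdeg'⟩ e0 e1
    obtain ⟨a0, a1, hf⟩ := hP z x hz (hLS (hC hx))
    obtain ⟨b0, b1, hg⟩ := hP z' x' hz' (hLS (hC hx'))
    have := hf.eq_opposite hg hr hr' (a1.symm ▸ hC hx) e0 e1 hdeg'
    rwa [b0] at this
  have hoppU : ∀ {z x r z' x' r'}, Arrow z x r → KindU z' x' r' →
      P z x r = P z' x' (r' + 1) → P z x (r + 1) = P z' x' r' → False := by
    intro z x r z' x' r' hA hU e0 e1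
    obtain ⟨h1, h2⟩ := hmeet hA (arrowU hU) e0 e1
    obtain ⟨a0, a1, hf⟩ := hP z x hA.1 (hLS (hC hA.2.1))
    have := hf.eq_of_mem_leaves (by omega) h1 (h2.symm ▸ hU.1)
    rw [this, a1] at h2
    exact hU.2.1 (h2 ▸ hA.2.1)
  have hoppI : ∀ {z x r z' x' r'}, KindI z x r → KindI z' x' r' →
      P z x r = P z' x' (r' + 1) → P z x (r + 1) = P z' x' r' → False := by
    intro z x r z' x' r' hI hI' e0 e1
    have hA := arrowI hI
    have hA' := arrowI hI'
    have hdisj : Disjoint (D z x) (D z' x') := by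
      rw [Finset.disjoint_left]
      intro y hy hy'
      have hF := follow hI.1 hI.2.1 hy hA.2.2.1 hA.2.2.2
      have hF' := follow hI'.1 hI'.2.1 hy' hA'.2.2.1 hA'.2.2.2
      have hyC := (hD.1 hy).1
      have hyS := hLS (hC hyC)
      have hB : Arrow z y r := ⟨hA.1, hyC, (hF r le_rfl).1, fun s h1 h2 => by
        rw [(hF s h2).2.1]
        exact hA.2.2.2 s h1 h2⟩
      have hB' : Arrow z' y r' := ⟨hA'.1, hyC, (hF' r' le_rfl).1, fun s h1 h2 => by
        rw [(hF' s h2).2.1]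
        exact hA'.2.2.2 s h1 h2⟩
      have f0 : P z y r = P z' y (r' + 1) := by
        rw [(hF r le_rfl).2.1, (hF' r' le_rfl).2.2, e0]
      have f1 : P z y (r + 1) = P z' y r' := by
        rw [(hF r le_rfl).2.2, (hF' r' le_rfl).2.1, e1]
      have hshort : ∀ {u v : V} {c : ℕ}, u ∈ S → 0 < c → c ≤ T.dist u y → P u y c = v →
          T.dist v y < T.dist u y := by
        intro u v c hu hc hcd hv
        obtain ⟨a0, a1, hf⟩ := hP u y hu hyS
        have := (hf.shift (a := c) (b := T.dist u y - c) (by omega)).dist_le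
        simp only [Nat.add_zero, Nat.add_sub_cancel' hcd, a1, hv] at this
        omega
      obtain ⟨m1, m2⟩ := hmeet hB hB' f0 f1
      obtain ⟨m1', m2'⟩ := hmeet hB' hB f1.symm f0.symm
      have := hshort hA.1 (by omega) m1 m2
      have := hshort hA'.1 (by omega) m1' m2'
      omega
    have hxx : x ≠ x' := by
      rintro rfl
      exact Finset.disjoint_left.1 hdisj (memD hI) (memD hI')
    obtain ⟨m1, m2⟩ := hmeet hA hA' e0 e1
    have hcard : (D z x).card + (D z' x').card ≤ C.card := by
      rw [← Finset.card_union_of_disjoint hdisj]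
      exact Finset.card_le_card
        (Finset.union_subset (Finset.filter_subset _ _) (Finset.filter_subset _ _))
    have h1 := rank_lt hI
    have h2 := rank_lt hI'
    refine (near1 hI.1 hI.2.1 (d := r + r' + 1) (by omega) (by omega) m1).2 x' (hC hI'.1)
      hxx.symm ?_
    rw [m2]
    exact hI'.2.1.symm
  have hopp : ∀ {z x r z' x' r'}, KindI z x r ∨ KindU z x r → KindI z' x' r' ∨ KindU z' x' r' →
      P z x r = P z' x' (r' + 1) → P z x (r + 1) = P z' x' r' → False := by
    intro z x r z' x' r' hK hK' e0 e1
    rcases hK' with hI' | hU'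
    · rcases hK with hI | hU
      · exact hoppI hI hI' e0 e1
      · exact hoppU (arrowI hI') hU e1.symm e0.symm
    · exact hoppU (arrow hK) hU' e0 e1
  let U : Finset V := (Set.toFinite (leaves T)).toFinset \ C
  have hU : ∀ {y}, y ∈ U ↔ y ∈ leaves T ∧ y ∉ C := by
    intro y
    simp [U]
  have hUcard : U.card = k + 1 - C.card := by
    rw [Finset.card_sdiff_of_subset, ← Set.ncard_eq_toFinset_card _, hl]
    intro y hy
    simpa using hC hy
  let I : Finset ((_ : V) × V) := C.sigma fun x => G.neighborFinset x
  let toArrow : ((_ : V) × V) ⊕ (V × ℕ) → V × V × ℕ :=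
    Sum.elim (fun p => (p.2, p.1, rank (D p.2 p.1) p.1)) fun p => (p.1, x₁, p.2)
  let dom := I.disjSum (U ×ˢ Finset.range l)
  have hkind : ∀ p ∈ dom, KindI (toArrow p).1 (toArrow p).2.1 (toArrow p).2.2 ∨
      KindU (toArrow p).1 (toArrow p).2.1 (toArrow p).2.2 := by
    rintro (⟨x, z⟩ | ⟨y, s⟩) hp
    · simp only [dom, Finset.inl_mem_disjSum, I, Finset.mem_sigma, mem_neighborFinset] at hp
      exact Or.inl ⟨hp.1, hp.2, rfl⟩
    · simp only [dom, Finset.inr_mem_disjSum, Finset.mem_product, Finset.mem_range, hU] at hp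
      exact Or.inr ⟨hp.1.1, hp.1.2, rfl, hp.2⟩
  have hinj : Set.InjOn toArrow dom := by
    rintro (⟨x, z⟩ | ⟨y, s⟩) hp (⟨x', z'⟩ | ⟨y', s'⟩) hp' e
    · simp only [toArrow, Sum.elim_inl, Prod.mk.injEq] at e
      rw [e.1, e.2.1]
    · simp only [toArrow, Sum.elim_inl, Sum.elim_inr, Prod.mk.injEq] at e
      simp only [dom, Finset.mem_coe, Finset.inl_mem_disjSum, Finset.inr_mem_disjSum, I,
        Finset.mem_sigma, mem_neighborFinset, Finset.mem_product, hU] at hp hp'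
      exact absurd hp.2 (e.1 ▸ hind (hC hp.1) hp'.1.1)
    · simp only [toArrow, Sum.elim_inl, Sum.elim_inr, Prod.mk.injEq] at e
      simp only [dom, Finset.mem_coe, Finset.inl_mem_disjSum, Finset.inr_mem_disjSum, I,
        Finset.mem_sigma, mem_neighborFinset, Finset.mem_product, hU] at hp hp'
      exact absurd hp'.2 (e.1 ▸ hind (hC hp'.1) hp.1.1)
    · simp only [toArrow, Sum.elim_inr, Prod.mk.injEq] at e
      rw [e.1, e.2.2]
  let toEdge : V × V × ℕ → Sym2 V := fun a => s(P a.1 a.2.1 a.2.2, P a.1 a.2.1 (a.2.2 + 1))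
  have hcard : dom.card ≤ (Set.toFinite T.edgeSet).toFinset.card := by
    refine Finset.card_le_card_of_injOn (fun p => toEdge (toArrow p)) ?_ ?_
    · intro p hp
      obtain ⟨hz, hx, hr, -⟩ := arrow (hkind p hp)
      have := (hP _ _ hz (hLS (hC hx))).2.2.1 _ hr
      simpa [toEdge] using this
    · intro p hp p' hp' e
      apply hinj hp hp'
      have hK := hkind p hp
      have hK' := hkind p' hp'
      have e : toEdge (toArrow p) = toEdge (toArrow p') := e
      generalize toArrow p = a at hK e ⊢
      generalize toArrow p' = a' at hK' e ⊢
      obtain ⟨z, x, r⟩ := a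
      obtain ⟨z', x', r'⟩ := a'
      simp only [toEdge, Sym2.eq_iff] at e
      rcases e with ⟨e0, e1⟩ | ⟨e0, e1⟩
      · rcases le_total r' r with hle | hle
        · obtain ⟨rfl, rfl, rfl⟩ := hsame hK hK' hle e0 e1
          rfl
        · obtain ⟨rfl, rfl, rfl⟩ := hsame hK' hK hle e0.symm e1.symm
          rfl
      · exact (hopp hK hK' e0 e1).elim
  rw [← Set.ncard_eq_toFinset_card _] at hcard
  have hedge := hT.ncard_edgeSet
  have hdom : dom.card = ∑ x ∈ C, G.degree x + l * (k + 1 - C.card) := by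
    rw [Finset.card_disjSum, Finset.card_sigma, Finset.card_product, Finset.card_range, hUcard,
      Nat.mul_comm l]
    simp only [card_neighborFinset_eq_degree]
  omega

/-- A tree can be prolonged beyond an end-vertex without creating more end-vertices. -/
lemma IsTreeOn.ncard_lt_maxKEndedOrder [Finite V] {G T : SimpleGraph V} {S : Set V} {k : ℕ}
    (hT : IsTreeOn T S) (hTG : T ≤ G) (hk : (leaves T).ncard ≤ k) {x z : V} (hx : x ∈ leaves T)
    (hxz : G.Adj x z) (hz : z ∉ S) : S.ncard < maxKEndedOrder G k := by
  have hxS := hT.mem_of_mem_leaves hx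
  have hadj : ∀ {p q}, (T ⊔ edge x z).Adj p q ↔
      T.Adj p q ∨ (p = x ∧ q = z) ∨ (p = z ∧ q = x) := by
    intro p q
    simp only [sup_adj, edge_adj]
    have := hxz.ne
    grind
  have hnew : (T ⊔ edge x z).Adj x z := by simp [hadj]
  have hnr : ¬ T.Reachable x z := by
    rintro ⟨w⟩
    cases w.reverse with
    | nil => exact hz hxS
    | cons h _ => exact hz (hT.mem_of_adj h)
  have hreach : ∀ u ∈ insert z S, (T ⊔ edge x z).Reachable x u := by
    rintro u (rfl | hu)
    · exact hnew.reachable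
    · exact (hT.reachable hxS hu).mono le_sup_left
  have hT' : IsTreeOn (T ⊔ edge x z) (insert z S) := by
    refine ⟨⟨z, Set.mem_insert _ _⟩, ?_, fun u hu v hv => (hreach u hu).symm.trans (hreach v hv),
      hT.isAcyclic.sup_edge_of_not_reachable hnr⟩
    intro u v h
    rcases hadj.1 h with h | ⟨rfl, -⟩ | ⟨rfl, -⟩
    · exact Set.mem_insert_of_mem _ (hT.mem_of_adj h)
    · exact Set.mem_insert_of_mem _ hxS
    · exact Set.mem_insert _ _
  have hsub : leaves (T ⊔ edge x z) ⊆ insert z (leaves T \ {x}) := by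
    intro v hv
    by_cases hvz : v = z
    · exact Or.inl hvz
    have hvx : v ≠ x := by
      rintro rfl
      obtain ⟨y, hy⟩ := mem_leaves_iff.1 hx
      have hvy : T.Adj v y := show y ∈ T.neighborSet v from hy ▸ Set.mem_singleton y
      have := eq_of_mem_leaves hv (hadj.2 (Or.inl hvy)) hnew
      exact hz (this ▸ hT.mem_of_adj hvy.symm)
    refine Or.inr ⟨?_, hvx⟩
    have : (T ⊔ edge x z).neighborSet v = T.neighborSet v := by
      ext q
      simp only [mem_neighborSet, hadj, hvx, hvz, false_and, or_false]
    have hv' : ((T ⊔ edge x z).neighborSet v).ncard = 1 := hv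
    rwa [this] at hv'
  have hcard : (leaves (T ⊔ edge x z)).ncard ≤ k := by
    have h1 := Set.ncard_le_ncard hsub (Set.toFinite _)
    have h2 := Set.ncard_insert_le z (leaves T \ {x})
    have h3 := Set.ncard_sdiff_singleton_add_one hx (Set.toFinite _)
    omega
  have hle : T ⊔ edge x z ≤ G := by
    intro p q h
    rcases hadj.1 h with h | ⟨rfl, rfl⟩ | ⟨rfl, rfl⟩
    · exact hTG h
    · exact hxz
    · exact hxz.symm
  have := hT'.ncard_le_maxKEndedOrder hle hcard
  rwa [Set.ncard_insert_of_notMem hz (Set.toFinite _)] at this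

/-- **Theorem 3.** If `G` is connected, `k, λ, m` are positive integers with
`m ≤ min{k, λ} + 1`, and `σ_m ≥ t_{k+1} - λ(k - m + 1)`, then
`t_k ≥ t_{k+1} - λ + 1`. -/
theorem theorem3 [Fintype V] (G : SimpleGraph V) [DecidableRel G.Adj]
    (hG : G.Connected) (k l m : ℕ) (hk : 1 ≤ k) (hl : 1 ≤ l) (hm : 1 ≤ m)
    (hmk : m ≤ k + 1) (hml : m ≤ l + 1)
    (h : (maxKEndedOrder G (k + 1) : ℕ∞) ≤
      minDegreeSum G m + ((l * (k + 1 - m) : ℕ) : ℕ∞)) :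
    maxKEndedOrder G k + l ≥ maxKEndedOrder G (k + 1) + 1 := by
  by_contra hcon
  have hlt : maxKEndedOrder G k + l ≤ maxKEndedOrder G (k + 1) := by omega
  have := hG.nonempty
  obtain ⟨T, S, hT, hTG, hS, hleaf⟩ :=
    exists_isTreeOn_of_lt hk (show maxKEndedOrder G k < maxKEndedOrder G (k + 1) by omega)
  have hrigid := rigidAbove_maxKEndedOrder G hk
  obtain ⟨hcard, hind⟩ := hrigid hT hTG (by omega) hleaf
  have hN : ∀ x ∈ leaves T, ∀ z, G.Adj x z → z ∈ S := by
    intro x hx z hxz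
    by_contra hz
    have := hT.ncard_lt_maxKEndedOrder hTG hleaf hx hxz hz
    omega
  obtain ⟨C, hC, hCm⟩ := Finset.exists_subset_card_eq
    (show m ≤ (Set.toFinite (leaves T)).toFinset.card by
      rw [← Set.ncard_eq_toFinset_card _]
      omega)
  have hCT : (C : Set V) ⊆ leaves T := fun x hx => by simpa using hC hx
  have hsum := hrigid.sum_degree_le hTG hT hcard hl (by omega) hN hCT
    (Finset.card_pos.1 (by omega)) (by omega)
  have hmin : minDegreeSum G m ≤ ∑ v ∈ C, (G.degree v : ℕ∞) :=
    iInf₂_le C ⟨hCm, fun _ hu _ hv => hind (hCT hu) (hCT hv)⟩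
  have hle := h.trans (add_le_add_left hmin _)
  rw [hCm, hS] at hsum
  norm_cast at hle
  omega
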